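/- For all n, k ∈ ℕ and every Δ ∈ {≤, =}, every language generated by a CD grammar system with at most n context-free components working in the (t∧Δk)-mode is a programmed language with appearance checking of index at most n·k: L(CD_n, CF[−λ], (t∧Δk)) ⊆ L_{n·k}(P, CF[−λ], ac), both with and without erasing rules. -/

import Mathlib

namespace CDHybrid

/-- Symbols: nonterminals are natural numbers, terminals come from `T`. -/
abbrev Symb (T : Type) := ℕ ⊕ T

/-- Sentential forms. -/
abbrev SForm (T : Type) := List (Symb T)

/-- A context-free rule `A → z`. -/
abbrev Rule (T : Type) := ℕ × SForm T

/-- Number of nonterminal occurrences in a sentential form. -/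
def ntCount {T : Type} (x : SForm T) : ℕ := (x.filter Sum.isLeft).length

/-- One rewriting step using some rule of the rule set `P`. -/
def RStep {T : Type} (P : List (Rule T)) (x y : SForm T) : Prop :=
  ∃ r ∈ P, ∃ u v : SForm T, x = u ++ Sum.inl r.1 :: v ∧ y = u ++ r.2 ++ v

/-- `m`-step derivation using only rules of `P`. -/
def StepsN {T : Type} (P : List (Rule T)) : ℕ → SForm T → SForm T → Prop
  | 0, x, y => x = y
  | m + 1, x, y => ∃ z, RStep P x z ∧ StepsN P m z y

/-- `m`-step derivation using only rules of `P`, all intermediate (and the final)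
sentential forms having at most `b` occurrences of nonterminals. -/
def StepsNB {T : Type} (P : List (Rule T)) (b : ℕ) : ℕ → SForm T → SForm T → Prop
  | 0, x, y => x = y
  | m + 1, x, y => ∃ z, RStep P x z ∧ ntCount z ≤ b ∧ StepsNB P b m z y

/-- Derivation modes of CD grammar systems. -/
inductive Mode where
  | eq : ℕ → Mode
  | le : ℕ → Mode
  | ge : ℕ → Mode
  | star : Mode
  | t : Mode
  | conj : Mode → Mode → Mode

/-- The predicate of a derivation mode: `modeOK P f m y` holds if an `m`-step
derivation by the component `P` ending in `y` is acceptable for mode `f`. -/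
def modeOK {T : Type} (P : List (Rule T)) : Mode → ℕ → SForm T → Prop
  | .eq k, m, _ => m = k
  | .le k, m, _ => m ≤ k
  | .ge k, m, _ => k ≤ m
  | .star, _, _ => True
  | .t, _, y => ¬ ∃ z, RStep P y z
  | .conj f g, m, y => modeOK P f m y ∧ modeOK P g m y

/-- A CD grammar system with context-free components. -/
structure CDGS (T : Type) where
  deg : ℕ
  start : ℕ
  comp : Fin deg → List (Rule T)

/-- λ-freeness: no erasing rules. -/
def CDGS.LamFree {T : Type} (G : CDGS T) : Prop :=
  ∀ i : Fin G.deg, ∀ r ∈ G.comp i, r.2 ≠ []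

/-- One derivation step of a component of `G` in mode `f`. -/
def CDGS.ModeStep {T : Type} (G : CDGS T) (f : Mode) (x y : SForm T) : Prop :=
  ∃ i : Fin G.deg, ∃ m : ℕ, StepsN (G.comp i) m x y ∧ modeOK (G.comp i) f m y

/-- One derivation step of a component of `G` in mode `f`, with all produced
sentential forms having at most `b` nonterminal occurrences. -/
def CDGS.ModeStepB {T : Type} (G : CDGS T) (f : Mode) (b : ℕ) (x y : SForm T) : Prop :=
  ∃ i : Fin G.deg, ∃ m : ℕ, StepsNB (G.comp i) b m x y ∧ modeOK (G.comp i) f m y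

/-- The language generated by `G` in mode `f`. -/
def CDGS.lang {T : Type} (G : CDGS T) (f : Mode) : Set (List T) :=
  { w | Relation.TransGen (G.ModeStep f) [Sum.inl G.start] (w.map Sum.inr) }

/-- The words of the language of `G` in mode `f` possessing a derivation of index
at most `b`, i.e., all sentential forms occurring in it have at most `b`
nonterminal occurrences. -/
def CDGS.langB {T : Type} (G : CDGS T) (f : Mode) (b : ℕ) : Set (List T) :=
  { w | ntCount ([Sum.inl G.start] : SForm T) ≤ b ∧
      Relation.TransGen (G.ModeStepB f b) [Sum.inl G.start] (w.map Sum.inr) }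

/-- Two languages are considered equal iff they differ at most in the empty word. -/
def EqL {T : Type} (L₁ L₂ : Set (List T)) : Prop := L₁ \ {[]} = L₂ \ {[]}

/-- The family `L(CD_n, CF[−λ], f)`; `lf = true` forbids erasing rules. -/
def CDFam (T : Type) (lf : Bool) (n : ℕ) (f : Mode) : Set (Set (List T)) :=
  { L | ∃ G : CDGS T, G.deg ≤ n ∧ (lf = true → G.LamFree) ∧ EqL (G.lang f) L }

/-- The family `L(CD_∞, CF[−λ], f)`. -/
def CDFamInf (T : Type) (lf : Bool) (f : Mode) : Set (Set (List T)) :=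
  { L | ∃ G : CDGS T, (lf = true → G.LamFree) ∧ EqL (G.lang f) L }

/-- The family `L_m(CD_n, CF[−λ], f)` of such languages of index at most `m`. -/
def CDFamInd (T : Type) (lf : Bool) (n : ℕ) (f : Mode) (m : ℕ) : Set (Set (List T)) :=
  { L | ∃ G : CDGS T, G.deg ≤ n ∧ (lf = true → G.LamFree) ∧ EqL (G.lang f) L ∧
      G.lang f ⊆ G.langB f m }

/-- The family `L_m(CD_∞, CF[−λ], f)`. -/
def CDFamIndInf (T : Type) (lf : Bool) (f : Mode) (m : ℕ) : Set (Set (List T)) :=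
  { L | ∃ G : CDGS T, (lf = true → G.LamFree) ∧ EqL (G.lang f) L ∧ G.lang f ⊆ G.langB f m }

/-- The family `L_fin(CD_∞, CF[−λ], f)`. -/
def CDFamFinInf (T : Type) (lf : Bool) (f : Mode) : Set (Set (List T)) :=
  { L | ∃ m : ℕ, 1 ≤ m ∧ L ∈ CDFamIndInf T lf f m }

/-- A context-free grammar. -/
structure CFG (T : Type) where
  start : ℕ
  rules : List (Rule T)

/-- The language generated by a context-free grammar. -/
def CFG.lang {T : Type} (G : CFG T) : Set (List T) :=
  { w | Relation.ReflTransGen (RStep G.rules) [Sum.inl G.start] (w.map Sum.inr) }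

/-- The words of `G.lang` having a derivation of index at most `m`. -/
def CFG.langB {T : Type} (G : CFG T) (m : ℕ) : Set (List T) :=
  { w | ntCount ([Sum.inl G.start] : SForm T) ≤ m ∧
      Relation.ReflTransGen (fun x y => RStep G.rules x y ∧ ntCount y ≤ m)
        [Sum.inl G.start] (w.map Sum.inr) }

/-- The family `L(CF)` of context-free languages. -/
def CFFam (T : Type) : Set (Set (List T)) := { L | ∃ G : CFG T, EqL G.lang L }

/-- The family `L_m(CF)` of context-free languages of index at most `m`. -/
def CFFamInd (T : Type) (m : ℕ) : Set (Set (List T)) :=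
  { L | ∃ G : CFG T, EqL G.lang L ∧ G.lang ⊆ G.langB m }

/-- The family `L_fin(CF)` of context-free languages of finite index. -/
def CFFamFin (T : Type) : Set (Set (List T)) :=
  { L | ∃ m : ℕ, 1 ≤ m ∧ L ∈ CFFamInd T m }

/-- A grammar is linear if every right-hand side contains at most one nonterminal. -/
def CFG.Linear {T : Type} (G : CFG T) : Prop := ∀ r ∈ G.rules, ntCount r.2 ≤ 1

/-- The family `L(LIN)` of linear context-free languages. -/
def LinFam (T : Type) : Set (Set (List T)) :=
  { L | ∃ G : CFG T, G.Linear ∧ EqL G.lang L }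

/-- The family `L(FIN)` of finite languages. -/
def FinFam (T : Type) : Set (Set (List T)) := { L | L.Finite }

/-- A programmed grammar with context-free rules. -/
structure PG (T : Type) where
  start : ℕ
  nLab : ℕ
  rule : Fin nLab → Rule T
  succ : Fin nLab → Set (Fin nLab)
  fail : Fin nLab → Set (Fin nLab)

def PG.LamFree {T : Type} (G : PG T) : Prop := ∀ r : Fin G.nLab, (G.rule r).2 ≠ []

/-- No appearance checking: all failure fields are empty. -/
def PG.NoAC {T : Type} (G : PG T) : Prop := ∀ r : Fin G.nLab, G.fail r = ∅

/-- One step of a programmed grammar on pairs (sentential form, label). -/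
def PG.PStep {T : Type} (G : PG T) (p q : SForm T × Fin G.nLab) : Prop :=
  (∃ u v : SForm T, p.1 = u ++ Sum.inl (G.rule p.2).1 :: v ∧
      q.1 = u ++ (G.rule p.2).2 ++ v ∧ q.2 ∈ G.succ p.2) ∨
  (Sum.inl (G.rule p.2).1 ∉ p.1 ∧ q.1 = p.1 ∧ q.2 ∈ G.fail p.2)

/-- The language generated by a programmed grammar. -/
def PG.lang {T : Type} (G : PG T) : Set (List T) :=
  { w | ∃ r₁ r₂ : Fin G.nLab,
      Relation.ReflTransGen G.PStep ([Sum.inl G.start], r₁) (w.map Sum.inr, r₂) }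

/-- The words of `G.lang` having a derivation of index at most `m`. -/
def PG.langB {T : Type} (G : PG T) (m : ℕ) : Set (List T) :=
  { w | ∃ r₁ r₂ : Fin G.nLab, ntCount ([Sum.inl G.start] : SForm T) ≤ m ∧
      Relation.ReflTransGen (fun p q => G.PStep p q ∧ ntCount q.1 ≤ m)
        ([Sum.inl G.start], r₁) (w.map Sum.inr, r₂) }

/-- The family `L_m(P, CF[−λ][, ac])`: programmed languages of index at most `m`;
`ac = false` forbids appearance checking, `lf = true` forbids erasing rules. -/
def PFamInd (T : Type) (lf ac : Bool) (m : ℕ) : Set (Set (List T)) :=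
  { L | ∃ G : PG T, (lf = true → G.LamFree) ∧ (ac = false → G.NoAC) ∧
      EqL G.lang L ∧ G.lang ⊆ G.langB m }

/-- The family `L_fin(P, CF[−λ][, ac])` of programmed languages of finite index. -/
def PFamFin (T : Type) (lf ac : Bool) : Set (Set (List T)) :=
  { L | ∃ m : ℕ, 1 ≤ m ∧ L ∈ PFamInd T lf ac m }


section Aux
variable {T : Type}

abbrev JJ (G : CDGS T) := Σ i : Fin G.deg, Fin (G.comp i).length

def rl (G : CDGS T) (j : JJ G) : Rule T := (G.comp j.1)[j.2]

inductive Lab (J : Type) (k : ℕ) where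
  | init : Lab J k
  | mark : J → Fin k → Lab J k
  | test : J → Fin k → J → Lab J k
  | unm : J → Fin k → Lab J k
  | chk : J → Lab J k

def Lab.enc {J : Type} {k : ℕ} :
    Lab J k → Unit ⊕ (J × Fin k) ⊕ (J × Fin k × J) ⊕ (J × Fin k) ⊕ J
  | .init => .inl ()
  | .mark j r => .inr (.inl (j, r))
  | .test j r j' => .inr (.inr (.inl (j, r, j')))
  | .unm j r => .inr (.inr (.inr (.inl (j, r))))
  | .chk j => .inr (.inr (.inr (.inr j)))

instance labFinite {J : Type} {k : ℕ} [Finite J] : Finite (Lab J k) := by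
  apply Finite.of_injective (Lab.enc (J := J) (k := k))
  intro a b h
  cases a <;> cases b <;> simp_all [Lab.enc]

def lrule (G : CDGS T) (k M : ℕ) : Lab (JJ G) k → Rule T
  | .init => (M + 1, [Sum.inl G.start])
  | .mark j _ => ((rl G j).1, [Sum.inl M])
  | .test _ _ j' => ((rl G j').1, [Sum.inl (rl G j').1])
  | .unm j _ => (M, (rl G j).2)
  | .chk j => ((rl G j).1, [Sum.inl (rl G j).1])

def lsucc (G : CDGS T) (k : ℕ) (ok : ℕ → Prop) : Lab (JJ G) k → Lab (JJ G) k → Prop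
  | .init, .mark _ r => ok (r.val + 1)
  | .mark j r, .unm j' r' => j' = j ∧ r' = r ∧ (r.val = 0 ∨ ∃ A, Sum.inl A ∈ (rl G j).2)
  | .mark j r, .test j' r' _ => j' = j ∧ r' = r
  | .test j r _, .unm j' r' => j' = j ∧ r' = r
  | .unm j r, .mark j' r' => j'.1 = j.1 ∧ r'.val + 1 = r.val
  | .unm j r, .chk j' => j'.1 = j.1 ∧ r.val = 0 ∧ j'.2.val = 0
  | _, _ => False

def lfail (G : CDGS T) (k : ℕ) (ok : ℕ → Prop) : Lab (JJ G) k → Lab (JJ G) k → Prop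
  | .chk j, .chk j' => j'.1 = j.1 ∧ j'.2.val = j.2.val + 1
  | .chk j, .mark _ r => j.2.val + 1 = (G.comp j.1).length ∧ ok (r.val + 1)
  | _, _ => False

def LStep (G : CDGS T) (k M : ℕ) (ok : ℕ → Prop) (p q : SForm T × Lab (JJ G) k) : Prop :=
  (∃ u v : SForm T, p.1 = u ++ Sum.inl (lrule G k M p.2).1 :: v ∧
      q.1 = u ++ (lrule G k M p.2).2 ++ v ∧ lsucc G k ok p.2 q.2) ∨
  (Sum.inl (lrule G k M p.2).1 ∉ p.1 ∧ q.1 = p.1 ∧ lfail G k ok p.2 q.2)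

noncomputable def mkPG (G : CDGS T) (k M : ℕ) (ok : ℕ → Prop) : PG T where
  start := M + 1
  nLab := Nat.card (Lab (JJ G) k)
  rule := fun l => lrule G k M ((Finite.equivFin _).symm l)
  succ := fun l => {l' | lsucc G k ok ((Finite.equivFin _).symm l) ((Finite.equivFin _).symm l')}
  fail := fun l => {l' | lfail G k ok ((Finite.equivFin _).symm l) ((Finite.equivFin _).symm l')}

def Low (M : ℕ) (x : SForm T) : Prop := ∀ A, Sum.inl A ∈ x → A < M

def GLow (M : ℕ) (G : CDGS T) : Prop :=
  G.start < M ∧ ∀ j : JJ G, (rl G j).1 < M ∧ Low M (rl G j).2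

lemma low_bound (x : SForm T) : ∃ M, Low M x := by
  induction x with
  | nil => exact ⟨0, by intro A h; simp at h⟩
  | cons a x ih =>
    obtain ⟨M, hM⟩ := ih
    rcases a with a | a
    · refine ⟨M + a + 1, ?_⟩
      intro A h
      rcases List.mem_cons.1 h with h | h
      · cases h; omega
      · have := hM A h; omega
    · refine ⟨M, ?_⟩
      intro A h
      rcases List.mem_cons.1 h with h | h
      · cases h
      · exact hM A h

lemma glow_exists (G : CDGS T) : ∃ M, GLow M G := by
  have h : ∀ j : JJ G, ∃ M, Low M (rl G j).2 := fun j => low_bound _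
  choose f hf using h
  refine ⟨G.start + 1 + ∑ j : JJ G, (f j + (rl G j).1 + 1), by omega, ?_⟩
  intro j
  have := Finset.single_le_sum (f := fun j : JJ G => f j + (rl G j).1 + 1) (s := Finset.univ)
    (fun _ _ => Nat.zero_le _) (Finset.mem_univ j)
  refine ⟨by omega, ?_⟩
  intro A hA
  have := hf j A hA
  omega

lemma rl_mem (G : CDGS T) (j : JJ G) : rl G j ∈ G.comp j.1 := List.getElem_mem _

lemma exists_rl (G : CDGS T) (i : Fin G.deg) (r : Rule T) (h : r ∈ G.comp i) :
    ∃ j : JJ G, j.1 = i ∧ rl G j = r := by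
  obtain ⟨c, hc, h⟩ := List.getElem_of_mem h
  exact ⟨⟨i, ⟨c, hc⟩⟩, rfl, h⟩

lemma stepsN_snoc {P : List (Rule T)} : ∀ {m : ℕ} {x y z : SForm T},
    StepsN P m x y → RStep P y z → StepsN P (m + 1) x z
  | 0, x, y, z, h, h' => by
      have h : x = y := h
      subst h; exact ⟨z, h', rfl⟩
  | m + 1, x, y, z, h, h' => by
      obtain ⟨a, h1, h2⟩ := h
      exact ⟨a, h1, stepsN_snoc h2 h'⟩

variable (G : CDGS T) (k M : ℕ) (ok : ℕ → Prop) (f : Mode)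

/-- partial-turn validity -/
def Valid (i : Fin G.deg) (r : ℕ) (x : SForm T) : Prop :=
  Low M x ∧ ∃ x0 a, Relation.ReflTransGen (G.ModeStep f) [Sum.inl G.start] x0 ∧
    ok (a + r) ∧ StepsN (G.comp i) a x0 x

def Inv : SForm T × Lab (JJ G) k → Prop
  | (x, .init) => x = [Sum.inl (M + 1)]
  | (x, .mark j r) => x = [Sum.inl (M + 1)] ∨
      (Valid G M ok f j.1 (r.val + 1) x ∧
        (Relation.ReflTransGen (G.ModeStep f) [Sum.inl G.start] x ∨ ∃ A, Sum.inl A ∈ x))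
  | (x, .test j r _) => x = [Sum.inl (M + 1)] ∨
      ∃ u v, x = u ++ Sum.inl M :: v ∧
        Valid G M ok f j.1 (r.val + 1) (u ++ Sum.inl (rl G j).1 :: v)
  | (x, .unm j r) => x = [Sum.inl (M + 1)] ∨
      ∃ u v, x = u ++ Sum.inl M :: v ∧
        Valid G M ok f j.1 (r.val + 1) (u ++ Sum.inl (rl G j).1 :: v) ∧
        (r.val = 0 ∨ ∃ A, Sum.inl A ∈ u ++ (rl G j).2 ++ v)
  | (x, .chk j) => x = [Sum.inl (M + 1)] ∨
      (Valid G M ok f j.1 0 x ∧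
        ∀ j' : JJ G, j'.1 = j.1 → j'.2.val < j.2.val → Sum.inl (rl G j').1 ∉ x)

variable {G k M ok f}

lemma inv_step (hG : GLow M G)
    (hf : ∀ P m (y : SForm T), modeOK P f m y ↔ (¬ ∃ z, RStep P y z) ∧ ok m)
    {p q : SForm T × Lab (JJ G) k} (hp : Inv G k M ok f p)
    (hs : LStep G k M ok p q) : Inv G k M ok f q := by
  obtain ⟨x, l⟩ := p
  obtain ⟨y, l'⟩ := q
  have hrl := fun j => (hG.2 j).1
  cases l with
  | init =>
    cases l' <;> simp [LStep, lsucc, lfail] at hs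
    rename_i j r
    obtain ⟨u, v, h1, h2, h3⟩ := hs
    have hx : x = [Sum.inl (M + 1)] := hp
    subst hx
    simp only [lrule] at h1 h2
    have : u = [] ∧ v = [] := by
      have := congrArg List.length h1
      simp at this
      constructor <;> apply List.eq_nil_of_length_eq_zero <;> omega
    obtain ⟨rfl, rfl⟩ := this
    simp at h2
    subst h2
    right
    refine ⟨⟨?_, _, 0, Relation.ReflTransGen.refl, by simpa using h3, rfl⟩,
      Or.inl Relation.ReflTransGen.refl⟩
    intro A hA
    simp at hA
    subst hA; exact hG.1
  | mark j r =>
    rcases hs with ⟨u, v, h1, h2, h3⟩ | ⟨_, _, h3⟩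
    swap
    · simp [lfail] at h3
    simp only [lrule] at h1 h2 h3
    rcases hp with hp | ⟨hv, _⟩
    · subst hp
      have : (Sum.inl (rl G j).1 : Symb T) ∈ ([Sum.inl (M+1)] : SForm T) := by rw [h1]; simp
      simp at this
      have := hrl j; omega
    cases l' <;> simp [lsucc] at h3
    · obtain ⟨rfl, rfl⟩ := h3
      right
      exact ⟨u, v, by simpa using h2, by rw [← h1]; exact hv⟩
    · obtain ⟨rfl, rfl, h3⟩ := h3
      right
      refine ⟨u, v, by simpa using h2, by rw [← h1]; exact hv, ?_⟩
      rcases h3 with h3 | ⟨A, h3⟩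
      · exact Or.inl (by simp [h3])
      · exact Or.inr ⟨A, by simp [h3]⟩
  | test j r j1 =>
    rcases hs with ⟨u, v, h1, h2, h3⟩ | ⟨_, _, h3⟩
    swap
    · simp [lfail] at h3
    simp only [lrule] at h1 h2 h3
    rcases hp with hp | ⟨u1, v1, hx, hv⟩
    · subst hp
      have : (Sum.inl (rl G j1).1 : Symb T) ∈ ([Sum.inl (M+1)] : SForm T) := by rw [h1]; simp
      simp at this
      have := hrl j1; omega
    cases l' <;> simp [lsucc] at h3
    obtain ⟨rfl, rfl⟩ := h3
    right
    have hxy : y = x := by rw [h1, h2]; simp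
    refine ⟨u1, v1, hxy.trans hx, hv, Or.inr ⟨(rl G j1).1, ?_⟩⟩
    have : (Sum.inl (rl G j1).1 : Symb T) ∈ x := by rw [h1]; simp
    rw [hx] at this
    simp only [List.mem_append, List.mem_cons] at this
    have h5 := hrl j1
    rcases this with h | h | h
    · simp [h]
    · simp at h; omega
    · simp [h]
  | unm j r =>
    rcases hs with ⟨u, v, h1, h2, h3⟩ | ⟨_, _, h3⟩
    swap
    · simp [lfail] at h3
    simp only [lrule] at h1 h2 h3
    rcases hp with hp | ⟨u1, v1, hx, ⟨hlow, x0, a, hr, hok, hst⟩, hnt⟩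
    · subst hp
      have : (Sum.inl M : Symb T) ∈ ([Sum.inl (M+1)] : SForm T) := by rw [h1]; simp
      simp at this
    have hu : (Sum.inl M : Symb T) ∉ u1 := fun h => by
      have := hlow M (by simp [h]); omega
    have hvv : (Sum.inl M : Symb T) ∉ v1 := fun h => by
      have := hlow M (by simp [h]); omega
    have : u1 = u ∧ v1 = v := by
      rw [hx] at h1
      have := (List.append_cons_inj_of_notMem hu hvv).1 h1
      tauto
    obtain ⟨rfl, rfl⟩ := this
    have hst' : StepsN (G.comp j.1) (a + 1) x0 y :=
      stepsN_snoc hst ⟨rl G j, rl_mem G j, u1, v1, rfl, h2⟩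
    have hlow' : Low M y := by
      intro A hA
      rw [h2] at hA
      simp only [List.mem_append] at hA
      rcases hA with (h | h) | h
      · exact hlow A (by simp [h])
      · exact (hG.2 j).2 A h
      · exact hlow A (by simp [h])
    cases l' <;> simp [lsucc] at h3
    · rename_i j' r'
      obtain ⟨h3, h4⟩ := h3
      right
      rw [← h3] at hst'
      refine ⟨⟨hlow', x0, a + 1, hr, ?_, hst'⟩, Or.inr ?_⟩
      · rw [← h4] at hok
        convert hok using 1
        omega
      · rcases hnt with h | ⟨A, h⟩
        · omega
        · exact ⟨A, by rw [h2]; exact h⟩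
    · rename_i j'
      obtain ⟨h3, h4, h5⟩ := h3
      right
      rw [← h3] at hst'
      refine ⟨⟨hlow', x0, a + 1, hr, ?_, hst'⟩, ?_⟩
      · simpa [h4] using hok
      · intro j2 _ h; omega
  | chk j =>
    rcases hs with ⟨u, v, h1, h2, h3⟩ | ⟨h1, h2, h3⟩
    · simp [lsucc] at h3
    simp only [lrule] at h1 h2 h3
    subst h2
    rcases hp with hp | ⟨hv, hc⟩
    · subst hp
      cases l' <;> simp [lfail] at h3
      · left; rfl
      · left; rfl
    have key : ∀ j' : JJ G, j'.1 = j.1 → j'.2.val < j.2.val + 1 →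
        (Sum.inl (rl G j').1 : Symb T) ∉ y := by
      intro j' h4 h5
      by_cases h6 : j'.2.val < j.2.val
      · exact hc j' h4 h6
      · have : j' = j := by
          obtain ⟨i, c⟩ := j
          obtain ⟨i', c'⟩ := j'
          simp only at h4
          subst h4
          simp only at h5 h6
          congr 1
          ext; omega
        rw [this]; exact h1
    cases l' <;> simp [lfail] at h3
    · rename_i j' r'
      obtain ⟨h3, h4⟩ := h3
      obtain ⟨hlow, x0, a, hr, hok, hst⟩ := hv
      have hreach : Relation.ReflTransGen (G.ModeStep f) [Sum.inl G.start] y := by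
        refine hr.tail ⟨j.1, a, hst, (hf _ _ _).2 ⟨?_, hok⟩⟩
        rintro ⟨z, ρ, hρ, u, v, hy, _⟩
        obtain ⟨j2, h5, h6⟩ := exists_rl G j.1 ρ hρ
        refine key j2 h5 ?_ ?_
        · have := j2.2.isLt
          rw [h3]
          convert this using 2
          rw [h5]
        · rw [hy, h6]; simp
      exact Or.inr ⟨⟨hlow, y, 0, hreach, by simpa using h4, rfl⟩, Or.inl hreach⟩
    · rename_i j'
      obtain ⟨h3, h4⟩ := h3
      right
      rw [← h3] at hv
      exact ⟨hv, fun j2 h5 h6 => key j2 (h5.trans h3) (by omega)⟩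

lemma inv_final
    (hf : ∀ P m (y : SForm T), modeOK P f m y ↔ (¬ ∃ z, RStep P y z) ∧ ok m)
    (w : List T) (l : Lab (JJ G) k) (h : Inv G k M ok f (w.map Sum.inr, l)) :
    w ∈ G.lang f := by
  have hno : ∀ A, (Sum.inl A : Symb T) ∉ (w.map Sum.inr : SForm T) := by intro A; simp
  have hne : ∀ A, (w.map Sum.inr : SForm T) ≠ [Sum.inl A] := by
    intro A h; exact hno A (by rw [h]; simp)
  have hR : Relation.ReflTransGen (G.ModeStep f) [Sum.inl G.start] (w.map Sum.inr) →
      w ∈ G.lang f := by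
    intro h
    rcases Relation.reflTransGen_iff_eq_or_transGen.1 h with h | h
    · exact absurd h (hne _)
    · exact h
  cases l with
  | init => exact absurd h (hne _)
  | mark j r =>
    rcases h with h | ⟨_, h | ⟨A, h⟩⟩
    · exact absurd h (hne _)
    · exact hR h
    · exact absurd h (hno _)
  | test j r j' =>
    rcases h with h | ⟨u, v, h, _⟩
    · exact absurd h (hne _)
    · exact absurd (by rw [h]; simp) (hno M)
  | unm j r =>
    rcases h with h | ⟨u, v, h, _⟩
    · exact absurd h (hne _)
    · exact absurd (by rw [h]; simp) (hno M)
  | chk j =>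
    rcases h with h | ⟨⟨_, x0, a, hr, hok, hst⟩, _⟩
    · exact absurd h (hne _)
    · refine hR (hr.tail ⟨j.1, a, hst, (hf _ _ _).2 ⟨?_, hok⟩⟩)
      rintro ⟨z, ρ, hρ, u, v, hy, _⟩
      exact hno ρ.1 (by rw [hy]; simp)

lemma sound (hG : GLow M G)
    (hf : ∀ P m (y : SForm T), modeOK P f m y ↔ (¬ ∃ z, RStep P y z) ∧ ok m) :
    (mkPG G k M ok).lang ⊆ G.lang f := by
  rintro w ⟨r1, r2, h⟩
  have key : ∀ q, Relation.ReflTransGen (mkPG G k M ok).PStep ([Sum.inl (M+1)], r1) q →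
      Inv G k M ok f (q.1, (Finite.equivFin _).symm q.2) := by
    intro q hq
    induction hq with
    | refl =>
      simp only
      generalize (Finite.equivFin (Lab (JJ G) k)).symm r1 = l
      cases l <;> simp [Inv]
    | tail _ hs ih => exact inv_step hG hf ih hs
  exact inv_final hf w _ (key _ h)

/-! Completeness -/

open Classical in
/-- occurrences of nonterminals not in the domain of components of `F` -/
noncomputable def outP (G : CDGS T) (F : Finset (Fin G.deg)) : Symb T → Bool
  | .inl A => decide (∀ i ∈ F, ∀ r ∈ G.comp i, r.1 ≠ A)
  | .inr _ => false

open Classical in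
noncomputable def inP (P : List (Rule T)) : Symb T → Bool
  | .inl A => decide (∃ r ∈ P, r.1 = A)
  | .inr _ => false

def Qb (G : CDGS T) (k : ℕ) (x : SForm T) : Prop :=
  ∀ F : Finset (Fin G.deg), x.countP (outP G F) ≤ (Finset.univ \ F).card * k

lemma Qb_term (w : List T) : Qb G k (w.map Sum.inr) := by
  intro F
  have : (w.map Sum.inr : SForm T).countP (outP G F) = 0 := by
    rw [List.countP_eq_zero]
    intro a ha
    obtain ⟨b, _, rfl⟩ := List.mem_map.1 ha
    simp [outP]
  omega

lemma Qb_nt {x : SForm T} (h : Qb G k x) : ntCount x ≤ G.deg * k := by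
  have h := h ∅
  have e : ntCount x = x.countP (outP G ∅) := by
    rw [ntCount, ← List.countP_eq_length_filter]
    apply List.countP_congr
    intro a _
    cases a <;> simp [outP]
  rw [e]
  simpa using h

lemma stepsN_count_out {P : List (Rule T)} {p : Symb T → Bool}
    (hp : ∀ r ∈ P, p (Sum.inl r.1) = false) : ∀ {m : ℕ} {x y : SForm T},
    StepsN P m x y → x.countP p ≤ y.countP p
  | 0, x, y, h => by
      have h : x = y := h
      rw [h]
  | m + 1, x, y, ⟨z, ⟨r, hr, u, v, h1, h2⟩, h⟩ => by
      refine le_trans ?_ (stepsN_count_out hp h)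
      rw [h1, h2]
      simp [List.countP_append, List.countP_cons, hp r hr]

lemma stepsN_count_in {P : List (Rule T)} {p : Symb T → Bool} : ∀ {m : ℕ} {x y : SForm T},
    StepsN P m x y → x.countP p ≤ y.countP p + m
  | 0, x, y, h => by
      have h : x = y := h
      rw [h]; simp
  | m + 1, x, y, ⟨z, ⟨r, hr, u, v, h1, h2⟩, h⟩ => by
      have := stepsN_count_in (p := p) h
      have h3 : x.countP p ≤ z.countP p + 1 := by
        rw [h1, h2]
        simp only [List.countP_append, List.countP_cons]
        split <;> omega
      omega

lemma Qb_back {i : Fin G.deg} {m : ℕ} {x y : SForm T} (hm : m ≤ k)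
    (hst : StepsN (G.comp i) m x y) (ht : ¬ ∃ z, RStep (G.comp i) y z) (hy : Qb G k y) :
    Qb G k x := by
  intro F
  by_cases hi : i ∈ F
  · refine le_trans (stepsN_count_out ?_ hst) (hy F)
    intro r hr
    simp only [outP, decide_eq_false_iff_not]
    intro h
    exact h i hi r hr rfl
  · have h1 : x.countP (outP G (insert i F)) ≤ (Finset.univ \ insert i F).card * k := by
      refine le_trans (stepsN_count_out ?_ hst) (hy _)
      intro r hr
      simp only [outP, decide_eq_false_iff_not]
      intro h
      exact h i (by simp) r hr rfl
    have h2 : x.countP (inP (G.comp i)) ≤ k := by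
      have h3 := stepsN_count_in (p := inP (G.comp i)) hst
      have h4 : y.countP (inP (G.comp i)) = 0 := by
        rw [List.countP_eq_zero]
        rintro (A | b) ha
        · simp only [inP, decide_eq_true_eq]
          rintro ⟨r, hr, rfl⟩
          obtain ⟨u, v, huv⟩ := List.append_of_mem ha
          exact ht ⟨_, r, hr, u, v, huv, rfl⟩
        · simp [inP]
      omega
    have h3 : x.countP (outP G F) ≤
        x.countP (outP G (insert i F)) + x.countP (inP (G.comp i)) := by
      clear h1 h2 hst
      induction x with
      | nil => simp
      | cons a x ih =>
        simp only [List.countP_cons]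
        have : (if outP G F a = true then 1 else 0) ≤
            (if outP G (insert i F) a = true then 1 else 0) +
            (if inP (G.comp i) a = true then 1 else 0) := by
          by_cases h : outP G F a = true
          · by_cases h' : inP (G.comp i) a = true
            · simp [h']; split <;> simp
            · have : outP G (insert i F) a = true := by
                rcases a with A | b
                · simp only [outP, inP, decide_eq_true_eq] at h h' ⊢
                  intro i' hi' r hr hA
                  rcases Finset.mem_insert.1 hi' with rfl | hi'
                  · exact h' ⟨r, hr, hA⟩
                  · exact h i' hi' r hr hA
                · simp [outP] at h
              simp [this, h]
          · simp [h]
        omega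
    have h4 : (Finset.univ \ F).card = (Finset.univ \ insert i F).card + 1 := by
      rw [← Finset.card_insert_of_notMem (a := i) (s := Finset.univ \ insert i F) (by simp)]
      congr 1
      ext a
      by_cases h : a = i
      · subst h; simp [hi]
      · simp [h]
    rw [h4, Nat.add_mul]
    omega

variable (G k M ok) in
def BStep (p q : SForm T × Lab (JJ G) k) : Prop :=
  LStep G k M ok p q ∧ ntCount q.1 ≤ G.deg * k

lemma nt_mark (u v : SForm T) (A B : ℕ) :
    ntCount (u ++ Sum.inl A :: v) = ntCount (u ++ Sum.inl B :: v) := by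
  simp [ntCount, List.filter_cons]

lemma turn {i : Fin G.deg} {y : SForm T} (ht : ¬ ∃ z, RStep (G.comp i) y z) (hy : Qb G k y)
    (c : JJ G) (hc : c.1 = i) (hc0 : c.2.val = 0) :
    ∀ (r : ℕ) (hr : r < k) (x : SForm T), StepsN (G.comp i) (r + 1) x y →
      ∃ j : JJ G, j.1 = i ∧ Sum.inl (rl G j).1 ∈ x ∧
        Relation.ReflTransGen (BStep G k M ok) (x, .mark j ⟨r, hr⟩) (y, .chk c) := by
  intro r
  induction r with
  | zero =>
    intro hr x hst
    have hx : Qb G k x := Qb_back (by omega) hst ht hy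
    obtain ⟨z, ⟨ρ, hρ, u, v, h1, h2⟩, hz⟩ := hst
    have hz : z = y := hz
    subst hz
    obtain ⟨j, rfl, rfl⟩ := exists_rl G i ρ hρ
    refine ⟨j, rfl, by rw [h1]; simp, ?_⟩
    refine Relation.ReflTransGen.head (b := (u ++ Sum.inl M :: v, .unm j ⟨0, hr⟩)) ?_
      (Relation.ReflTransGen.single ?_)
    · refine ⟨Or.inl ⟨u, v, h1, by simp [lrule], by simp [lsucc]⟩, ?_⟩
      simp only
      rw [nt_mark u v M (rl G j).1, ← h1]
      exact Qb_nt hx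
    · exact ⟨Or.inl ⟨u, v, by simp [lrule], by simpa [lrule] using h2,
        by simp [lsucc, hc, hc0]⟩, Qb_nt hy⟩
  | succ r ih =>
    intro hr x hst
    have hx : Qb G k x := Qb_back (by omega) hst ht hy
    obtain ⟨z, ⟨ρ, hρ, u, v, h1, h2⟩, hz⟩ := hst
    have hQz : Qb G k z := Qb_back (by omega) hz ht hy
    obtain ⟨j', hj', hmem, hreach⟩ := ih (by omega) z hz
    obtain ⟨j, rfl, rfl⟩ := exists_rl G i ρ hρ
    refine ⟨j, rfl, by rw [h1]; simp, ?_⟩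
    have hb : ntCount (u ++ Sum.inl M :: v) ≤ G.deg * k := by
      rw [nt_mark u v M (rl G j).1, ← h1]
      exact Qb_nt hx
    have hlast : Relation.ReflTransGen (BStep G k M ok)
        (u ++ Sum.inl M :: v, .unm j ⟨r + 1, hr⟩) (y, .chk c) := by
      refine Relation.ReflTransGen.head ⟨Or.inl ⟨u, v, by simp [lrule], ?_, ?_⟩, ?_⟩ hreach
      · simpa [lrule] using h2
      · simp [lsucc, hj']
      · exact Qb_nt hQz
    by_cases hnt : ∃ A, Sum.inl A ∈ (rl G j).2
    · refine Relation.ReflTransGen.head ⟨Or.inl ⟨u, v, h1, ?_, ?_⟩, hb⟩ hlast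
      · simp [lrule]
      · simp [lsucc]; exact hnt
    · have hB : (Sum.inl (rl G j').1 : Symb T) ∈ u ++ Sum.inl M :: v := by
        rw [h2] at hmem
        simp only [List.mem_append] at hmem
        rcases hmem with (h | h) | h
        · simp [h]
        · exact absurd ⟨_, h⟩ hnt
        · simp [h]
      obtain ⟨u', v', huv⟩ := List.append_of_mem hB
      refine Relation.ReflTransGen.head (b := (u ++ Sum.inl M :: v, .test j ⟨r + 1, hr⟩ j'))
        ⟨Or.inl ⟨u, v, h1, ?_, ?_⟩, hb⟩
        (Relation.ReflTransGen.head (b := (u ++ Sum.inl M :: v, .unm j ⟨r + 1, hr⟩)) ?_ hlast)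
      · simp [lrule]
      · simp [lsucc]
      · exact ⟨Or.inl ⟨u', v', huv, by simp [lrule, huv], by simp [lsucc]⟩, hb⟩

lemma checks {i : Fin G.deg} {y : SForm T} (ht : ¬ ∃ z, RStep (G.comp i) y z) (hy : Qb G k y)
    (h0 : 0 < (G.comp i).length) : ∀ (c : ℕ) (hc : c < (G.comp i).length),
      Relation.ReflTransGen (BStep G k M ok) (y, .chk ⟨i, ⟨0, h0⟩⟩) (y, .chk ⟨i, ⟨c, hc⟩⟩) := by
  intro c
  induction c with
  | zero => intro hc; exact Relation.ReflTransGen.refl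
  | succ c ih =>
    intro hc
    refine (ih (by omega)).tail ⟨Or.inr ⟨?_, rfl, by simp [lfail]⟩, Qb_nt hy⟩
    intro hm
    obtain ⟨u, v, huv⟩ := List.append_of_mem hm
    exact ht ⟨_, _, rl_mem G ⟨i, ⟨c, by omega⟩⟩, u, v, huv, rfl⟩

lemma simul
    (hf : ∀ P m (y : SForm T), modeOK P f m y ↔ (¬ ∃ z, RStep P y z) ∧ ok m)
    (hok : ∀ m, ok m → m ≤ k) (w : List T) (x : SForm T)
    (h : Relation.ReflTransGen (G.ModeStep f) x (w.map Sum.inr)) :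
    Qb G k x ∧ (x = w.map Sum.inr ∨ ∃ (j : JJ G) (r : Fin k) (l : Lab (JJ G) k),
      ok (r.val + 1) ∧
        Relation.ReflTransGen (BStep G k M ok) (x, .mark j r) (w.map Sum.inr, l)) := by
  induction h using Relation.ReflTransGen.head_induction_on with
  | refl => exact ⟨Qb_term w, Or.inl rfl⟩
  | head hs _ ih =>
    rename_i x y _
    obtain ⟨i, m, hst, hm⟩ := hs
    obtain ⟨ht, hm⟩ := (hf _ _ _).1 hm
    obtain ⟨hQ, ih⟩ := ih
    refine ⟨Qb_back (hok m hm) hst ht hQ, ?_⟩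
    rcases m with _ | r
    · have hst : x = y := hst
      rw [hst]; exact ih
    right
    have hr : r < k := hok _ hm
    have hlen : 0 < (G.comp i).length := by
      obtain ⟨z, ⟨ρ, hρ, _⟩, _⟩ := hst
      exact List.length_pos_of_mem hρ
    obtain ⟨j, _, _, hreach⟩ :=
      turn (M := M) (ok := ok) ht hQ ⟨i, ⟨0, hlen⟩⟩ rfl rfl r hr x hst
    rcases ih with ih | ⟨j', r', l, hok', ih⟩
    · refine ⟨j, ⟨r, hr⟩, .chk ⟨i, ⟨0, hlen⟩⟩, hm, ?_⟩
      rw [← ih]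
      exact hreach
    · refine ⟨j, ⟨r, hr⟩, l, hm, hreach.trans
        ((checks ht hQ hlen ((G.comp i).length - 1) (by omega)).trans
          (Relation.ReflTransGen.head (b := (y, .mark j' r')) ⟨Or.inr ⟨?_, rfl, ?_⟩, Qb_nt hQ⟩ ih))⟩
      · intro hmm
        obtain ⟨u, v, huv⟩ := List.append_of_mem hmm
        exact ht ⟨_, _, rl_mem G ⟨i, ⟨(G.comp i).length - 1, by omega⟩⟩, u, v, huv, rfl⟩
      · simp only [lfail]
        exact ⟨by omega, hok'⟩

lemma complete {N : ℕ} (hN : G.deg * k ≤ N) (hN1 : 1 ≤ N)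
    (hf : ∀ P m (y : SForm T), modeOK P f m y ↔ (¬ ∃ z, RStep P y z) ∧ ok m)
    (hok : ∀ m, ok m → m ≤ k) :
    G.lang f ⊆ (mkPG G k M ok).langB N := by
  intro w hw
  obtain ⟨hQ, h⟩ := simul (M := M) hf hok w _ (Relation.TransGen.to_reflTransGen hw)
  rcases h with h | ⟨j, r, l, hok', h⟩
  · have : (Sum.inl G.start : Symb T) ∈ (w.map Sum.inr : SForm T) := by rw [← h]; simp
    simp at this
  let e := Finite.equivFin (Lab (JJ G) k)
  refine ⟨e .init, e l, by simpa [ntCount, List.filter_cons] using hN1, ?_⟩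
  have h' : Relation.ReflTransGen (BStep G k M ok) ([Sum.inl (M+1)], .init)
      (w.map Sum.inr, l) := by
    refine Relation.ReflTransGen.head ⟨Or.inl ⟨[], [], by simp [lrule], by simp [lrule], ?_⟩,
      Qb_nt hQ⟩ h
    simpa [lsucc] using hok'
  refine Relation.ReflTransGen.lift (fun p : SForm T × Lab (JJ G) k => (p.1, e p.2)) ?_ _ _ h'
  rintro ⟨x, a⟩ ⟨y, b⟩ ⟨hs, hb⟩
  refine ⟨?_, le_trans hb hN⟩
  have hs' : LStep G k M ok (x, e.symm (e a)) (y, e.symm (e b)) := by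
    simpa using hs
  exact hs'

lemma langB_sub (H : PG T) (N : ℕ) : H.langB N ⊆ H.lang := by
  rintro w ⟨r1, r2, _, h⟩
  exact ⟨r1, r2, Relation.ReflTransGen.mono (fun _ _ h => h.1) _ _ h⟩

lemma mkPG_lamFree (h : G.LamFree) : (mkPG G k M ok).LamFree := by
  intro r
  change (lrule G k M ((Finite.equivFin _).symm r)).2 ≠ []
  generalize (Finite.equivFin (Lab (JJ G) k)).symm r = l
  cases l <;> simp [lrule]
  exact h _ _ (rl_mem G _)

end Aux

/-- For all n, k ∈ ℕ (positive) and every Δ ∈ {≤, =},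
L(CD_n, CF[−λ], (t∧Δk)) ⊆ L_{n·k}(P, CF[−λ], ac), both with and without
erasing rules. -/
theorem stmt6 (lf : Bool) (n k : ℕ) (hn : 1 ≤ n) (hk : 1 ≤ k) (d : ℕ → Mode)
    (hd : d = Mode.le ∨ d = Mode.eq) :
    CDFam ℕ lf n (Mode.conj Mode.t (d k)) ⊆ PFamInd ℕ lf true (n * k) := by
  rintro L ⟨G, hdeg, hlf, hL⟩
  obtain ⟨ok, hf, hok⟩ : ∃ ok : ℕ → Prop,
      (∀ P m (y : SForm ℕ), modeOK P (Mode.conj Mode.t (d k)) m y ↔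
        (¬ ∃ z, RStep P y z) ∧ ok m) ∧ ∀ m, ok m → m ≤ k := by
    rcases hd with rfl | rfl
    · exact ⟨fun m => m ≤ k, fun _ _ _ => Iff.rfl, fun _ h => h⟩
    · exact ⟨fun m => m = k, fun _ _ _ => Iff.rfl, fun _ h => h.le⟩
  obtain ⟨M, hM⟩ := glow_exists G
  have h1 : (mkPG G k M ok).lang ⊆ G.lang (Mode.conj Mode.t (d k)) := sound hM hf
  have h2 : G.lang (Mode.conj Mode.t (d k)) ⊆ (mkPG G k M ok).langB (n * k) :=
    complete (Nat.mul_le_mul_right k hdeg) (Nat.mul_pos hn hk) hf hok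
  refine ⟨mkPG G k M ok, fun h => mkPG_lamFree (hlf h), by simp, ?_, h1.trans h2⟩
  rw [(h1.antisymm (h2.trans (langB_sub _ _)) :
    (mkPG G k M ok).lang = G.lang (Mode.conj Mode.t (d k)))]
  exact hL

end CDHybrid
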